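/- arXiv:2404.15407 — 3 statements merged into one kernel-verified Lean document; each statement's English description precedes it below -/
import Mathlib

section
/- Suppose U is a unitary on (ℂ²)^{⊗(n+2)} ⊗ (ℂ²)^{⊗α} such that (Π_k^± ⊗ ⟨0^α|) U (Π_k^± ⊗ |0^α⟩) = Π_k^± P^{down} Π_k^±. Then V := ((I^{⊗n} ⊗ (HZ) ⊗ I) ⊗ I^{⊗α}) U satisfies (Π_k ⊗ ⟨0^α|) V (Π_k ⊗ |0^α⟩) = Δ_k^{down} / (√2 · K^{down}). -/
open BigOperators Matrix Kronecker

attribute [local instance] Classical.propDecidable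

noncomputable section

namespace QWSC

/-- A finite abstract simplicial complex on the vertex set `Fin n`:
a family of vertex sets closed under taking subsets. -/
def IsComplex (n : ℕ) (X : Finset (Finset (Fin n))) : Prop :=
  ∀ s ∈ X, ∀ t ⊆ s, t ∈ X

/-- The weighted boundary operator `∂_k : C_k → C_{k-1}` written as a matrix in the
orthonormal chain bases (rows are indexed by `(k-1)`-simplices, columns by `k`-simplices;
a `k`-simplex has `k+1` vertices).  On the orthonormal basis vector of
`σ = {v_0 < … < v_k}` it has entries `(-1)^j w(v_j)` at the face `σ \ {v_j}`. -/
def boundary (n : ℕ) (X : Finset (Finset (Fin n))) (w : Fin n → ℝ) (k : ℕ) :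
    Matrix (Finset (Fin n)) (Finset (Fin n)) ℝ :=
  Matrix.of fun τ σ =>
    if σ ∈ X ∧ σ.card = k + 1 ∧ τ ⊆ σ ∧ τ.card = k then
      ∑ v ∈ σ \ τ, (-1 : ℝ) ^ ((σ.filter fun u => u < v).card) * w v
    else 0

/-- The weighted up Laplacian `Δ_k^{up} = ∂_{k+1} ∂_{k+1}^*`. -/
def upLap (n : ℕ) (X : Finset (Finset (Fin n))) (w : Fin n → ℝ) (k : ℕ) :
    Matrix (Finset (Fin n)) (Finset (Fin n)) ℝ :=
  boundary n X w (k + 1) * (boundary n X w (k + 1))ᵀ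

/-- The weighted down Laplacian `Δ_k^{down} = ∂_k^* ∂_k`. -/
def downLap (n : ℕ) (X : Finset (Finset (Fin n))) (w : Fin n → ℝ) (k : ℕ) :
    Matrix (Finset (Fin n)) (Finset (Fin n)) ℝ :=
  (boundary n X w k)ᵀ * boundary n X w k

/-- The weighted combinatorial Laplacian `Δ_k = Δ_k^{up} + Δ_k^{down}`. -/
def fullLap (n : ℕ) (X : Finset (Finset (Fin n))) (w : Fin n → ℝ) (k : ℕ) :
    Matrix (Finset (Fin n)) (Finset (Fin n)) ℝ :=
  upLap n X w k + downLap n X w k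

/-- `true` iff removing the vertex `v` from `σ` reverses the induced orientation,
i.e. the position of `v` in the increasing ordering of `σ` is odd. -/
def faceFlip (n : ℕ) (σ : Finset (Fin n)) (v : Fin n) : Bool :=
  decide ((σ.filter fun u => u < v).card % 2 = 1)

/-- An oriented simplex: a vertex set together with an orientation bit
(`false` = positively oriented, `true` = negatively oriented). -/
abbrev OSimp (n : ℕ) := Finset (Fin n) × Bool

/-- Up-adjacency `σ ∼↑ σ'` of oriented simplices: the vertex sets are distinct, their
union is a common coface belonging to `X`, and the orientations induced on the common
coface by `σ` and by `σ'` agree. -/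
def UpAdj (n : ℕ) (X : Finset (Finset (Fin n))) (σ σ' : OSimp n) : Prop :=
  σ.1 ≠ σ'.1 ∧ σ.1 ∪ σ'.1 ∈ X ∧ (σ.1 ∪ σ'.1).card = σ.1.card + 1 ∧
    σ'.1.card = σ.1.card ∧
    ∀ v ∈ σ'.1 \ σ.1, ∀ v' ∈ σ.1 \ σ'.1,
      xor σ.2 (faceFlip n (σ.1 ∪ σ'.1) v) = xor σ'.2 (faceFlip n (σ.1 ∪ σ'.1) v')

/-- Down-adjacency `σ ∼↓ σ'` of oriented simplices: the vertex sets are distinct, they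
share a common face (their intersection, of cardinality one less), and the orientations
induced on the common face by `σ` and by `σ'` agree. -/
def DownAdj (n : ℕ) (σ σ' : OSimp n) : Prop :=
  σ.1 ≠ σ'.1 ∧ (σ.1 ∩ σ'.1).card + 1 = σ.1.card ∧ σ'.1.card = σ.1.card ∧
    ∀ v ∈ σ.1 \ σ'.1, ∀ v' ∈ σ'.1 \ σ.1,
      xor σ.2 (faceFlip n σ.1 v) = xor σ'.2 (faceFlip n σ'.1 v')

/-- `up(σ)`: the vertices `u ∉ σ` with `σ ∪ {u} ∈ X`. -/
def upSet (n : ℕ) (X : Finset (Finset (Fin n))) (σ : Finset (Fin n)) : Finset (Fin n) :=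
  Finset.univ.filter fun u => u ∉ σ ∧ insert u σ ∈ X

/-- The set of `k`-simplices of `X` (those with `k+1` vertices). -/
def simplices (n : ℕ) (X : Finset (Finset (Fin n))) (k : ℕ) : Finset (Finset (Fin n)) :=
  X.filter fun s => s.card = k + 1

/-- Normalization constant `K^{up} = max_{σ∈X_k} Σ_{u∈V∖σ} Σ_{v∈σ∪{u}} w(u)w(v)`. -/
def Kup (n : ℕ) (X : Finset (Finset (Fin n))) (w : Fin n → ℝ) (k : ℕ) : ℝ :=
  sSup {x : ℝ | ∃ σ ∈ X, σ.card = k + 1 ∧ x = ∑ u ∈ σᶜ, ∑ v ∈ insert u σ, w u * w v}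

/-- Normalization constant `K^{down} = max_{σ∈X_k} Σ_{u∈σ} Σ_{v∈V∖(σ∖{u})} w(u)w(v)`. -/
def Kdown (n : ℕ) (X : Finset (Finset (Fin n))) (w : Fin n → ℝ) (k : ℕ) : ℝ :=
  sSup {x : ℝ | ∃ σ ∈ X, σ.card = k + 1 ∧ x = ∑ u ∈ σ, ∑ v ∈ (σ.erase u)ᶜ, w u * w v}

/-- Normalization constant `K = max_{σ∈X_k} (Σ_{v∈V} w(v)² + Σ_{u∈V∖σ} Σ_{v∈σ} w(u)w(v))`. -/
def Kfull (n : ℕ) (X : Finset (Finset (Fin n))) (w : Fin n → ℝ) (k : ℕ) : ℝ :=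
  sSup {x : ℝ | ∃ σ ∈ X, σ.card = k + 1 ∧
    x = (∑ v : Fin n, w v ^ 2) + ∑ u ∈ σᶜ, ∑ v ∈ σ, w u * w v}

/-- The `k`-th chain space `C_k`: the span of the basis vectors indexed by
`k`-simplices of `X`, inside the coordinate space of the orthonormal chain basis. -/
def chainSpace (n : ℕ) (X : Finset (Finset (Fin n))) (k : ℕ) :
    Submodule ℝ (Finset (Fin n) → ℝ) :=
  Submodule.span ℝ ((fun σ => Pi.single σ (1 : ℝ)) '' {σ | σ ∈ X ∧ σ.card = k + 1})

/-- The state space `S_k = X_k^± ∪ {Θ}` of the walks; `none` is the absorbing state `Θ`. -/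
abbrev SState (n : ℕ) := Option (OSimp n)

/-- A state is a member of `S_k`: either the absorbing state, or an oriented
`k`-simplex of `X`. -/
def valid (n : ℕ) (X : Finset (Finset (Fin n))) (k : ℕ) : SState n → Prop
  | none => True
  | some σ => σ.1 ∈ X ∧ σ.1.card = k + 1

/-- `η^{up}_σ = 1 − (1/K^{up}) Σ_{τ∈X_k^+} |(Δ_k^{up})_{τ,σ_+}|`. -/
def etaUp (n : ℕ) (X : Finset (Finset (Fin n))) (w : Fin n → ℝ) (k : ℕ) (σ : OSimp n) : ℝ :=
  1 - (∑ τ ∈ simplices n X k, |upLap n X w k τ σ.1|) / Kup n X w k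

/-- `η^{down}_σ = 1 − (1/K^{down}) Σ_{τ∈X_k^+} |(Δ_k^{down})_{τ,σ_+}|`. -/
def etaDown (n : ℕ) (X : Finset (Finset (Fin n))) (w : Fin n → ℝ) (k : ℕ) (σ : OSimp n) : ℝ :=
  1 - (∑ τ ∈ simplices n X k, |downLap n X w k τ σ.1|) / Kdown n X w k

/-- `η_σ = 1 − (1/K) Σ_{τ∈X_k^+} |(Δ_k)_{τ,σ_+}|`. -/
def etaFull (n : ℕ) (X : Finset (Finset (Fin n))) (w : Fin n → ℝ) (k : ℕ) (σ : OSimp n) : ℝ :=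
  1 - (∑ τ ∈ simplices n X k, |fullLap n X w k τ σ.1|) / Kfull n X w k

/-- The up-walk transition matrix `P^{up}` on `S_k`. -/
def Pup (n : ℕ) (X : Finset (Finset (Fin n))) (w : Fin n → ℝ) (k : ℕ) :
    SState n → SState n → ℝ
  | some σ, some σ' =>
      if σ.1 ∈ X ∧ σ.1.card = k + 1 ∧ σ'.1 ∈ X ∧ σ'.1.card = k + 1 then
        if σ = σ' then (∑ u ∈ upSet n X σ.1, w u ^ 2) / Kup n X w k
        else if UpAdj n X σ σ' then
          ((∑ v ∈ σ.1 \ σ'.1, w v) * (∑ v ∈ σ'.1 \ σ.1, w v)) / Kup n X w k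
        else 0
      else 0
  | some σ, none => if σ.1 ∈ X ∧ σ.1.card = k + 1 then etaUp n X w k σ else 0
  | none, none => 1
  | none, some _ => 0

/-- The down-walk transition matrix `P^{down}` on `S_k`. -/
def Pdown (n : ℕ) (X : Finset (Finset (Fin n))) (w : Fin n → ℝ) (k : ℕ) :
    SState n → SState n → ℝ
  | some σ, some σ' =>
      if σ.1 ∈ X ∧ σ.1.card = k + 1 ∧ σ'.1 ∈ X ∧ σ'.1.card = k + 1 then
        if σ = σ' then (∑ v ∈ σ.1, w v ^ 2) / Kdown n X w k
        else if DownAdj n σ σ' then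
          ((∑ v ∈ σ.1 \ σ'.1, w v) * (∑ v ∈ σ'.1 \ σ.1, w v)) / Kdown n X w k
        else 0
      else 0
  | some σ, none => if σ.1 ∈ X ∧ σ.1.card = k + 1 then etaDown n X w k σ else 0
  | none, none => 1
  | none, some _ => 0

/-- The harmonic-walk transition matrix `P` on `S_k`. -/
def Pharm (n : ℕ) (X : Finset (Finset (Fin n))) (w : Fin n → ℝ) (k : ℕ) :
    SState n → SState n → ℝ
  | some σ, some σ' =>
      if σ.1 ∈ X ∧ σ.1.card = k + 1 ∧ σ'.1 ∈ X ∧ σ'.1.card = k + 1 then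
        if σ = σ' then
          ((∑ u ∈ upSet n X σ.1, w u ^ 2) + ∑ v ∈ σ.1, w v ^ 2) / Kfull n X w k
        else if DownAdj n σ σ' ∧ ¬ UpAdj n X σ (σ'.1, !σ'.2) then
          ((∑ v ∈ σ.1 \ σ'.1, w v) * (∑ v ∈ σ'.1 \ σ.1, w v)) / Kfull n X w k
        else 0
      else 0
  | some σ, none => if σ.1 ∈ X ∧ σ.1.card = k + 1 then etaFull n X w k σ else 0
  | none, none => 1
  | none, some _ => 0

/-! ### Quantum encodings -/

/-- The computational basis of `(ℂ²)^{⊗(n+2)}`: `n` membership qubits, one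
orientation qubit, and one qubit flagging the absorbing state. -/
abbrev QIdx (n : ℕ) := (Fin n → Bool) × Bool × Bool

/-- The encoding of states of `S_k` as computational basis states:
`|σ⟩ = |x_σ⟩|s(σ)⟩|0⟩` and `|Θ⟩ = |0^n⟩|0⟩|1⟩`. -/
def encode (n : ℕ) : SState n → QIdx n
  | none => (fun _ => false, false, true)
  | some σ => (fun i => decide (i ∈ σ.1), σ.2, false)

/-- The all-zeros basis state `|0^{n+2}⟩`. -/
def zeroQ (n : ℕ) : QIdx n := (fun _ => false, false, false)

/-- The projector `Π_k^±` onto the span of the encoded oriented `k`-simplices of `X`. -/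
def PiPM (n : ℕ) (X : Finset (Finset (Fin n))) (k : ℕ) : Matrix (QIdx n) (QIdx n) ℂ :=
  Matrix.of fun p q =>
    if p = q ∧ ∃ σ : OSimp n, σ.1 ∈ X ∧ σ.1.card = k + 1 ∧ p = encode n (some σ) then 1 else 0

/-- The projector `Π_k` onto the span of the encoded positively oriented
`k`-simplices of `X`. -/
def PiK (n : ℕ) (X : Finset (Finset (Fin n))) (k : ℕ) : Matrix (QIdx n) (QIdx n) ℂ :=
  Matrix.of fun p q =>
    if p = q ∧ ∃ s ∈ X, s.card = k + 1 ∧ p = encode n (some (s, false)) then 1 else 0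

/-- Decode a basis state into the state of `S_k` it represents (if any). -/
def decodeQ (n : ℕ) : QIdx n → Option (SState n) := fun q =>
  if q.2.2 = false then some (some ((Finset.univ.filter fun i => q.1 i = true), q.2.1))
  else if q = encode n none then some none else none

/-- Identify a transition kernel `P` on `S_k` with the operator on `(ℂ²)^{⊗(n+2)}`
having `⟨σ'|P|σ⟩ = P_{σ,σ'}` for `σ, σ' ∈ S_k`, vanishing off the span of `S_k`. -/
def toQMat (n : ℕ) (P : SState n → SState n → ℝ) : Matrix (QIdx n) (QIdx n) ℂ :=
  Matrix.of fun q' q =>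
    match decodeQ n q, decodeQ n q' with
    | some σ, some σ' => (P σ σ' : ℂ)
    | _, _ => 0

/-- Identify a matrix indexed by vertex sets (acting on the chain space in the
orthonormal basis of positively oriented simplices) with an operator on
`(ℂ²)^{⊗(n+2)}` supported on the encoded positively oriented simplices. -/
def lapQ (n : ℕ) (L : Matrix (Finset (Fin n)) (Finset (Fin n)) ℝ) :
    Matrix (QIdx n) (QIdx n) ℂ :=
  Matrix.of fun q' q =>
    if q'.2.1 = false ∧ q'.2.2 = false ∧ q.2.1 = false ∧ q.2.2 = false then
      (L (Finset.univ.filter fun i => q'.1 i = true)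
         (Finset.univ.filter fun i => q.1 i = true) : ℂ)
    else 0

/-- The SWAP unitary exchanging the two `(n+2)`-qubit registers. -/
def swapMat (n : ℕ) : Matrix (QIdx n × QIdx n) (QIdx n × QIdx n) ℂ :=
  Matrix.of fun p q => if p.1 = q.2 ∧ p.2 = q.1 then 1 else 0

/-- The compression `(· ⊗ ⟨0^{n+2}|) W (· ⊗ |0^{n+2}⟩)` of an operator on two
`(n+2)`-qubit registers to the first register. -/
def compress (n : ℕ) (W : Matrix (QIdx n × QIdx n) (QIdx n × QIdx n) ℂ) :
    Matrix (QIdx n) (QIdx n) ℂ :=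
  Matrix.of fun q' q => W (q', zeroQ n) (q, zeroQ n)

/-- The compression `(· ⊗ ⟨0^α|) W (· ⊗ |0^α⟩)` of an operator on the system
register together with an `α`-qubit ancilla register. -/
def compressA (n α : ℕ) (W : Matrix (QIdx n × (Fin α → Bool)) (QIdx n × (Fin α → Bool)) ℂ) :
    Matrix (QIdx n) (QIdx n) ℂ :=
  Matrix.of fun q' q => W (q', fun _ => false) (q, fun _ => false)

/-- The gate `I^{⊗n} ⊗ (HZ) ⊗ I` acting on the orientation qubit, where `H` is the
Hadamard gate and `Z` the Pauli-Z gate. -/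
def hzGate (n : ℕ) : Matrix (QIdx n) (QIdx n) ℂ :=
  Matrix.of fun p q =>
    if p.1 = q.1 ∧ p.2.2 = q.2.2 then
      (if p.2.1 = false ∧ q.2.1 = true then -((Real.sqrt 2 : ℂ))⁻¹ else ((Real.sqrt 2 : ℂ))⁻¹)
    else 0


theorem aux_diag (n : ℕ) (X : Finset (Finset (Fin n))) (w : Fin n → ℝ) (k : ℕ)
    (s : Finset (Fin n)) (hs : s ∈ X) (hc : s.card = k + 1) :
    downLap n X w k s s = ∑ v ∈ s, w v ^ 2 := by
  simp only [downLap, Matrix.mul_apply, Matrix.transpose_apply]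
  symm
  apply Finset.sum_of_injOn (fun v => s.erase v)
  · intro a ha b hb h
    exact Finset.erase_injOn s ha hb h
  · intro a _; simp
  · intro t _ ht
    simp only [boundary, Matrix.of_apply]
    rw [if_neg, zero_mul]
    rintro ⟨-, -, h1, h2⟩
    apply ht
    have h3 : (s \ t).card = 1 := by rw [Finset.card_sdiff_of_subset h1]; omega
    obtain ⟨v, hv⟩ := Finset.card_eq_one.mp h3
    have hvs : v ∈ s \ t := by rw [hv]; simp
    refine ⟨v, (Finset.mem_sdiff.mp hvs).1, ?_⟩
    show s.erase v = t
    rw [← Finset.sdiff_singleton_eq_erase, ← hv]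
    exact Finset.sdiff_sdiff_eq_self h1
  · intro v hv
    have h1 : s \ (s.erase v) = {v} := by
      rw [← Finset.sdiff_singleton_eq_erase]
      exact Finset.sdiff_sdiff_eq_self (by simpa using hv)
    simp only [boundary, Matrix.of_apply]
    rw [if_pos ⟨hs, hc, Finset.erase_subset _ _, by rw [Finset.card_erase_of_mem hv]; omega⟩, h1]
    simp only [Finset.sum_singleton]
    have h2 : ((-1 : ℝ) ^ ((s.filter fun u => u < v).card)) ^ 2 = 1 := by
      rw [← pow_mul, mul_comm, pow_mul]; simp
    linear_combination (-(w v) ^ 2) * h2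

theorem aux_sub {n k : ℕ} {s t : Finset (Fin n)} (hs : s.card = k + 1)
    (hi : (s ∩ t).card = k) : ∃ v, s \ t = {v} := by
  apply Finset.card_eq_one.mp
  have := Finset.card_sdiff_add_card_inter s t
  omega

theorem aux_off (n : ℕ) (X : Finset (Finset (Fin n))) (w : Fin n → ℝ) (k : ℕ)
    (s t : Finset (Fin n)) (hs : s ∈ X) (hsc : s.card = k + 1) (ht : t ∈ X)
    (htc : t.card = k + 1) (hne : s ≠ t) :
    downLap n X w k t s = if (s ∩ t).card = k then
      (∑ v ∈ s \ t, (-1 : ℝ) ^ ((s.filter fun u => u < v).card) * w v) *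
      (∑ v ∈ t \ s, (-1 : ℝ) ^ ((t.filter fun u => u < v).card) * w v) else 0 := by
  simp only [downLap, Matrix.mul_apply, Matrix.transpose_apply]
  have key : ∀ r, boundary n X w k r t * boundary n X w k r s ≠ 0 →
      r = s ∩ t ∧ (s ∩ t).card = k := by
    intro r hr
    simp only [boundary, Matrix.of_apply] at hr
    have h1 := left_ne_zero_of_mul hr
    have h2 := right_ne_zero_of_mul hr
    have h1' := (ite_ne_right_iff.mp h1).1
    have h2' := (ite_ne_right_iff.mp h2).1
    have hsub : r ⊆ s ∩ t := Finset.subset_inter h2'.2.2.1 h1'.2.2.1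
    have hlt : (s ∩ t).card < s.card := by
      apply Finset.card_lt_card
      refine ⟨Finset.inter_subset_left, fun h => hne ?_⟩
      exact Finset.eq_of_subset_of_card_le (h.trans Finset.inter_subset_right) (by omega)
    have hle := Finset.card_le_card hsub
    have hr4 := h1'.2.2.2
    exact ⟨Finset.eq_of_subset_of_card_le hsub (by omega), by omega⟩
  split_ifs with h
  · rw [Finset.sum_eq_single (s ∩ t)]
    · simp only [boundary, Matrix.of_apply]
      rw [if_pos ⟨ht, htc, Finset.inter_subset_right, h⟩,
        if_pos ⟨hs, hsc, Finset.inter_subset_left, h⟩, Finset.sdiff_inter_self_left,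
        Finset.sdiff_inter_self_right, mul_comm]
    · intro r _ hr
      by_contra h0
      exact hr (key r h0).1
    · intro h; exact absurd (Finset.mem_univ _) h
  · apply Finset.sum_eq_zero
    intro r _
    by_contra h0
    exact h (key r h0).2

theorem aux_sign (a b : ℕ) (x y : ℝ) :
    ((-1 : ℝ) ^ a * x) * ((-1) ^ b * y) =
      if decide (a % 2 = 1) = decide (b % 2 = 1) then x * y else -(x * y) := by
  rcases Nat.even_or_odd a with ha | ha <;> rcases Nat.even_or_odd b with hb | hb <;>
    simp [ha.neg_one_pow, hb.neg_one_pow, Nat.even_iff.mp, Nat.odd_iff.mp] <;>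
    grind

theorem aux_bool (a b : Bool) (h : ¬ a = b) : a = !b := by
  cases a <;> cases b <;> simp_all

theorem aux_P (n : ℕ) (X : Finset (Finset (Fin n))) (w : Fin n → ℝ) (k : ℕ)
    (s t : Finset (Fin n)) (hs : s ∈ X) (hsc : s.card = k + 1) (ht : t ∈ X)
    (htc : t.card = k + 1) :
    Pdown n X w k (some (s, false)) (some (t, false)) -
      Pdown n X w k (some (s, false)) (some (t, true)) =
    downLap n X w k t s / Kdown n X w k := by
  simp only [Pdown, hs, hsc, ht, htc, and_self, if_true, Prod.mk.injEq, and_true]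
  by_cases hst : s = t
  · subst hst
    rw [aux_diag n X w k s hs hsc]
    simp [DownAdj]
  · rw [aux_off n X w k s t hs hsc ht htc hst]
    by_cases hi : (s ∩ t).card = k
    · obtain ⟨v, hv⟩ := aux_sub hsc hi
      obtain ⟨u, hu⟩ := aux_sub htc (by rwa [Finset.inter_comm] : (t ∩ s).card = k)
      simp only [DownAdj, hst, hi, hv, hu, hsc, htc, Finset.mem_singleton, forall_eq,
        Finset.sum_singleton, aux_sign, faceFlip, if_true, if_false, false_and,
        ne_eq, not_false_eq_true, true_and, Bool.false_xor, Bool.true_xor]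
      by_cases hd : decide ((s.filter fun u => u < v).card % 2 = 1) =
        decide ((t.filter fun x => x < u).card % 2 = 1)
      · rw [if_pos hd, if_neg (by rw [hd]; simp), if_pos hd]; ring
      · rw [if_neg hd, if_pos (aux_bool _ _ hd), if_neg hd]; ring
    · simp [DownAdj, hst, hi, hsc]

def good (n : ℕ) (X : Finset (Finset (Fin n))) (k : ℕ) (s : Finset (Fin n)) : Prop :=
  s ∈ X ∧ s.card = k + 1

def dec (n : ℕ) (f : Fin n → Bool) : Finset (Fin n) := Finset.univ.filter fun i => f i = true

theorem dec_enc (n : ℕ) (s : Finset (Fin n)) : dec n (fun i => decide (i ∈ s)) = s := by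
  ext; simp [dec]

theorem enc_dec (n : ℕ) (f : Fin n → Bool) : (fun i => decide (i ∈ dec n f)) = f := by
  ext; simp [dec]

theorem PiPM_eq (n : ℕ) (X : Finset (Finset (Fin n))) (k : ℕ) :
    PiPM n X k = Matrix.diagonal fun p => if good n X k (dec n p.1) ∧ p.2.2 = false then 1 else 0 := by
  ext p q
  have : (∃ σ : OSimp n, σ.1 ∈ X ∧ σ.1.card = k + 1 ∧ p = encode n (some σ)) ↔
      (good n X k (dec n p.1) ∧ p.2.2 = false) := by
    constructor
    · rintro ⟨σ, h1, h2, rfl⟩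
      simp [encode, dec_enc, good, h1, h2]
    · rintro ⟨⟨h1, h2⟩, h3⟩
      refine ⟨(dec n p.1, p.2.1), h1, h2, ?_⟩
      simp only [encode, enc_dec, ← h3]
  simp only [PiPM, Matrix.of_apply, this, Matrix.diagonal_apply]
  split_ifs <;> simp_all

theorem PiK_eq (n : ℕ) (X : Finset (Finset (Fin n))) (k : ℕ) :
    PiK n X k = Matrix.diagonal fun p =>
      if good n X k (dec n p.1) ∧ p.2.1 = false ∧ p.2.2 = false then 1 else 0 := by
  ext p q
  have : (∃ s ∈ X, s.card = k + 1 ∧ p = encode n (some (s, false))) ↔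
      (good n X k (dec n p.1) ∧ p.2.1 = false ∧ p.2.2 = false) := by
    constructor
    · rintro ⟨σ, h1, h2, rfl⟩
      simp [encode, dec_enc, good, h1, h2]
    · rintro ⟨⟨h1, h2⟩, h3, h4⟩
      refine ⟨dec n p.1, h1, h2, ?_⟩
      simp only [encode, enc_dec]
      exact Prod.ext rfl (Prod.ext h3 h4)
  simp only [PiK, Matrix.of_apply, this, Matrix.diagonal_apply]
  split_ifs <;> simp_all

theorem lap_zero (n : ℕ) (X : Finset (Finset (Fin n))) (w : Fin n → ℝ) (k : ℕ)
    (s t : Finset (Fin n)) (h : ¬ (good n X k t ∧ good n X k s)) :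
    downLap n X w k t s = 0 := by
  simp only [downLap, Matrix.mul_apply, Matrix.transpose_apply]
  apply Finset.sum_eq_zero
  intro r _
  by_contra hr
  simp only [boundary, Matrix.of_apply] at hr
  have h1 := (ite_ne_right_iff.mp (left_ne_zero_of_mul hr)).1
  have h2 := (ite_ne_right_iff.mp (right_ne_zero_of_mul hr)).1
  exact h ⟨⟨h1.1, h1.2.1⟩, ⟨h2.1, h2.2.1⟩⟩

theorem gate_entry (n α : ℕ)
    (U : Matrix (QIdx n × (Fin α → Bool)) (QIdx n × (Fin α → Bool)) ℂ)
    (f : Fin n → Bool) (q : QIdx n) :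
    compressA n α ((hzGate n ⊗ₖ (1 : Matrix (Fin α → Bool) (Fin α → Bool) ℂ)) * U)
      (f, false, false) q =
    (Real.sqrt 2 : ℂ)⁻¹ * (compressA n α U (f, false, false) q -
      compressA n α U (f, true, false) q) := by
  simp only [compressA, Matrix.of_apply, Matrix.mul_apply, Matrix.kroneckerMap_apply]
  rw [Fintype.sum_prod_type]
  have h1 : ∀ p : QIdx n, (∑ a : Fin α → Bool, hzGate n (f, false, false) p *
      (1 : Matrix (Fin α → Bool) (Fin α → Bool) ℂ) (fun _ => false) a * U (p, a) (q, fun _ => false)) =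
      hzGate n (f, false, false) p * U (p, fun _ => false) (q, fun _ => false) := by
    intro p
    rw [Finset.sum_eq_single (fun _ => false)]
    · simp
    · intro b _ hb
      rw [Matrix.one_apply_ne (Ne.symm hb)]; simp
    · simp
  rw [Finset.sum_congr rfl fun p _ => h1 p, Fintype.sum_prod_type]
  rw [Finset.sum_eq_single f]
  · simp [Fintype.sum_prod_type, hzGate]
    ring
  · intro b _ hb
    apply Finset.sum_eq_zero
    intro r _
    simp [hzGate, Ne.symm hb]
  · simp

/-- If `U` is a unitary encoding of `Π_k^± P^{down} Π_k^±` with an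
`α`-qubit ancilla, then `V = ((I^{⊗n} ⊗ HZ ⊗ I) ⊗ I^{⊗α}) U` is a unitary encoding of
`Δ_k^{down}/(√2 · K^{down})`. -/
theorem down_walk_encodes_down_laplacian (n k α : ℕ) (X : Finset (Finset (Fin n)))
    (hX : IsComplex n X) (w : Fin n → ℝ) (hw : ∀ v, 0 < w v)
    (hne : (simplices n X k).Nonempty)
    (U : Matrix (QIdx n × (Fin α → Bool)) (QIdx n × (Fin α → Bool)) ℂ)
    (hU : U ∈ Matrix.unitaryGroup (QIdx n × (Fin α → Bool)) ℂ)
    (henc : PiPM n X k * compressA n α U * PiPM n X k =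
      PiPM n X k * toQMat n (Pdown n X w k) * PiPM n X k) :
    PiK n X k *
        compressA n α ((hzGate n ⊗ₖ (1 : Matrix (Fin α → Bool) (Fin α → Bool) ℂ)) * U) *
        PiK n X k =
      ((Real.sqrt 2 : ℂ) * (Kdown n X w k : ℂ))⁻¹ • lapQ n (downLap n X w k) := by
  rw [PiPM_eq] at henc
  have key : ∀ (f g : Fin n → Bool) (a b : Bool), good n X k (dec n f) → good n X k (dec n g) →
      compressA n α U (f, a, false) (g, b, false) =
        (Pdown n X w k (some (dec n g, b)) (some (dec n f, a)) : ℂ) := by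
    intro f g a b hf hg
    have := congrFun (congrFun henc (f, a, false)) (g, b, false)
    simp only [Matrix.mul_diagonal, Matrix.diagonal_mul, hf, hg, and_self, if_true, mul_one,
      one_mul] at this
    rw [this]
    simp [toQMat, decodeQ, dec]
  rw [PiK_eq]
  ext ⟨f, a, c⟩ ⟨g, b, d⟩
  simp only [Matrix.mul_diagonal, Matrix.diagonal_mul, Matrix.smul_apply, lapQ, Matrix.of_apply,
    smul_eq_mul]
  by_cases h0 : a = false ∧ c = false ∧ b = false ∧ d = false
  · obtain ⟨rfl, rfl, rfl, rfl⟩ := h0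
    by_cases hg : good n X k (dec n f) ∧ good n X k (dec n g)
    · rw [gate_entry, key _ _ _ _ hg.1 hg.2, key _ _ _ _ hg.1 hg.2]
      have h := aux_P n X w k (dec n g) (dec n f) hg.2.1 hg.2.2 hg.1.1 hg.1.2
      rw [← Complex.ofReal_sub, h]
      simp only [hg.1, hg.2, and_self, if_true, mul_one, one_mul, mul_inv, Complex.ofReal_div]
      simp only [dec]
      ring
    · have h := lap_zero n X w k (dec n g) (dec n f) hg
      simp only [dec] at h
      rw [h]
      by_cases h1 : good n X k (dec n f)
      · have h2 : ¬ good n X k (dec n g) := fun h2 => hg ⟨h1, h2⟩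
        simp [h2]
      · simp [h1]
  · rw [if_neg h0, mul_zero]
    by_cases h1 : a = false ∧ c = false
    · have h2 : ¬ (b = false ∧ d = false) := fun h2 => h0 ⟨h1.1, h1.2, h2⟩
      simp only [h2, and_false, if_false, mul_zero]
    · simp only [h1, and_false, if_false, zero_mul]

end QWSC
end
end

section
/- Suppose U is a unitary on (ℂ²)^{⊗(n+2)} ⊗ (ℂ²)^{⊗α} such that (Π_k^± ⊗ ⟨0^α|) U (Π_k^± ⊗ |0^α⟩) = Π_k^± P Π_k^±, where P is the harmonic-walk transition matrix. Then V := ((I^{⊗n} ⊗ (HZ) ⊗ I) ⊗ I^{⊗α}) U satisfies (Π_k ⊗ ⟨0^α|) V (Π_k ⊗ |0^α⟩) = Δ_k / (√2 · K). -/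
open BigOperators Matrix Kronecker

attribute [local instance] Classical.propDecidable

noncomputable section

namespace QWSC

theorem boundary_erase {n : ℕ} (X : Finset (Finset (Fin n))) (w : Fin n → ℝ) (k : ℕ)
    (τ σ : Finset (Fin n)) (v : Fin n) (h1 : σ \ τ = {v}) (h2 : σ ∈ X) (h3 : σ.card = k + 1)
    (h4 : τ ⊆ σ) (h5 : τ.card = k) :
    boundary n X w k τ σ = (-1 : ℝ) ^ ((σ.filter fun u => u < v).card) * w v := by
  simp [boundary, h1, h2, h3, h4, h5]

theorem boundary_ne {n : ℕ} {X : Finset (Finset (Fin n))} {w : Fin n → ℝ} {k : ℕ}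
    {τ σ : Finset (Fin n)} (h : boundary n X w k τ σ ≠ 0) :
    σ ∈ X ∧ σ.card = k + 1 ∧ τ ⊆ σ ∧ τ.card = k := by
  by_contra hc
  exact h (by simp only [boundary, Matrix.of_apply]; rw [if_neg hc])

theorem down_diag {n : ℕ} (X : Finset (Finset (Fin n))) (w : Fin n → ℝ) (k : ℕ)
    (s : Finset (Fin n)) (hs : s ∈ X) (hc : s.card = k + 1) :
    downLap n X w k s s = ∑ v ∈ s, w v ^ 2 := by
  simp only [downLap, Matrix.mul_apply, Matrix.transpose_apply]
  have hinj : Set.InjOn (fun v => s.erase v) (s : Set (Fin n)) := Finset.erase_injOn s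
  rw [← Finset.sum_subset (Finset.subset_univ (s.image fun v => s.erase v)), Finset.sum_image hinj]
  · refine Finset.sum_congr rfl fun v hv => ?_
    rw [boundary_erase X w k (s.erase v) s v (by ext x; simp; grind) hs hc (Finset.erase_subset _ _)
      (by rw [Finset.card_erase_of_mem hv, hc]; rfl)]
    rw [mul_mul_mul_comm, ← pow_add, Even.neg_one_pow ⟨_, rfl⟩]; ring
  · intro ρ _ hρ
    by_contra hne
    obtain ⟨_, _, h3, h4⟩ := boundary_ne (left_ne_zero_of_mul hne)
    apply hρ
    obtain ⟨v, hv⟩ := Finset.card_eq_one.1 (show (s \ ρ).card = 1 by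
      rw [Finset.card_sdiff_of_subset h3]; omega)
    refine Finset.mem_image.2 ⟨v, ?_, ?_⟩
    · have : v ∈ s \ ρ := by simp [hv]
      exact (Finset.mem_sdiff.1 this).1
    · rw [Finset.erase_eq, ← hv, Finset.sdiff_sdiff_eq_self h3]

theorem up_diag {n : ℕ} (X : Finset (Finset (Fin n))) (w : Fin n → ℝ) (k : ℕ)
    (s : Finset (Fin n)) (hc : s.card = k + 1) :
    upLap n X w k s s = ∑ v ∈ upSet n X s, w v ^ 2 := by
  simp only [upLap, Matrix.mul_apply, Matrix.transpose_apply]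
  have hinj : Set.InjOn (fun v => insert v s) (upSet n X s : Set (Fin n)) := by
    intro a ha b hb hab
    simp only [upSet, Finset.coe_filter, Finset.mem_univ, true_and, Set.mem_setOf_eq] at ha hb
    have : a ∈ insert b s := by rw [← show insert a s = insert b s from hab]; simp
    rcases Finset.mem_insert.1 this with h | h
    · exact h
    · exact absurd h ha.1
  rw [← Finset.sum_subset (Finset.subset_univ ((upSet n X s).image fun v => insert v s)),
    Finset.sum_image hinj]
  · refine Finset.sum_congr rfl fun v hv => ?_
    simp only [upSet, Finset.mem_filter, Finset.mem_univ, true_and] at hv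
    rw [boundary_erase X w (k+1) s (insert v s) v (by ext x; simp; grind) hv.2
      (by rw [Finset.card_insert_of_notMem hv.1, hc]) (Finset.subset_insert _ _) hc]
    rw [mul_mul_mul_comm, ← pow_add, Even.neg_one_pow ⟨_, rfl⟩]; ring
  · intro ρ _ hρ
    by_contra hne
    obtain ⟨h1, h2, h3, h4⟩ := boundary_ne (left_ne_zero_of_mul hne)
    apply hρ
    obtain ⟨v, hv⟩ := Finset.card_eq_one.1 (show (ρ \ s).card = 1 by
      rw [Finset.card_sdiff_of_subset h3]; omega)
    have hvm : v ∈ ρ \ s := by simp [hv]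
    have he : insert v s = ρ := by
      rw [Finset.insert_eq, ← hv, Finset.sdiff_union_of_subset h3]
    refine Finset.mem_image.2 ⟨v, ?_, he⟩
    simp only [upSet, Finset.mem_filter, Finset.mem_univ, true_and, he]
    exact ⟨(Finset.mem_sdiff.1 hvm).2, h1⟩

/-- an off-diagonal entry of the down Laplacian -/
theorem down_off {n : ℕ} (X : Finset (Finset (Fin n))) (w : Fin n → ℝ) (k : ℕ)
    (t s : Finset (Fin n)) (ht : t.card = k + 1) (hts : t ≠ s) (hsc : s.card = k + 1) :
    downLap n X w k t s = boundary n X w k (t ∩ s) t * boundary n X w k (t ∩ s) s := by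
  simp only [downLap, Matrix.mul_apply, Matrix.transpose_apply]
  refine Finset.sum_eq_single _ (fun ρ _ hρ => ?_) (by simp)
  by_contra hne
  obtain ⟨_, _, h3, h4⟩ := boundary_ne (left_ne_zero_of_mul hne)
  obtain ⟨_, _, h5, _⟩ := boundary_ne (right_ne_zero_of_mul hne)
  apply hρ
  refine Finset.eq_of_subset_of_card_le (Finset.subset_inter h3 h5) ?_
  have : (t ∩ s).card < t.card := by
    refine Finset.card_lt_card ⟨Finset.inter_subset_left, fun h => hts ?_⟩
    exact Finset.eq_of_subset_of_card_le (fun x hx => (Finset.mem_inter.1 (h hx)).2) (by omega)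
  omega

theorem up_off {n : ℕ} (X : Finset (Finset (Fin n))) (w : Fin n → ℝ) (k : ℕ)
    (t s : Finset (Fin n)) (ht : t.card = k + 1) (hts : t ≠ s) (hsc : s.card = k + 1) :
    upLap n X w k t s = boundary n X w (k+1) t (t ∪ s) * boundary n X w (k+1) s (t ∪ s) := by
  simp only [upLap, Matrix.mul_apply, Matrix.transpose_apply]
  refine Finset.sum_eq_single _ (fun ρ _ hρ => ?_) (by simp)
  by_contra hne
  obtain ⟨_, h2, h3, h4⟩ := boundary_ne (left_ne_zero_of_mul hne)
  obtain ⟨_, _, h5, _⟩ := boundary_ne (right_ne_zero_of_mul hne)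
  apply hρ
  symm
  refine Finset.eq_of_subset_of_card_le (Finset.union_subset h3 h5) ?_
  have : t.card < (t ∪ s).card := by
    refine Finset.card_lt_card ⟨Finset.subset_union_left, fun h => hts ?_⟩
    exact (Finset.eq_of_subset_of_card_le (fun x hx => (h (Finset.mem_union_right _ hx))) (by omega)).symm
  omega

theorem sgn_flip {n : ℕ} (σ : Finset (Fin n)) (v : Fin n) :
    (-1 : ℝ) ^ ((σ.filter fun u => u < v).card) = if faceFlip n σ v then -1 else 1 := by
  unfold faceFlip
  rcases Nat.even_or_odd ((σ.filter fun u => u < v).card) with h | h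
  · rw [h.neg_one_pow, if_neg]; simpa using Nat.even_iff.1 h
  · rw [h.neg_one_pow, if_pos]; simpa using Nat.odd_iff.1 h

theorem flip_union {n : ℕ} (t s : Finset (Fin n)) (a b : Fin n)
    (ha : t \ s = {a}) (hb : s \ t = {b}) :
    xor (faceFlip n (t ∪ s) a) (faceFlip n (t ∪ s) b) = !(xor (faceFlip n t a) (faceFlip n s b)) := by
  have hat : a ∈ t ∧ a ∉ s := by rw [← Finset.mem_sdiff, ha]; simp
  have hbs : b ∈ s ∧ b ∉ t := by rw [← Finset.mem_sdiff, hb]; simp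
  have e1 : t ∪ s = insert b t := by
    rw [Finset.insert_eq, ← hb, Finset.union_comm, Finset.sdiff_union_self_eq_union]
  have e2 : t ∪ s = insert a s := by
    rw [Finset.insert_eq, ← ha, Finset.sdiff_union_self_eq_union]
  have hab : a ≠ b := by rintro rfl; exact hat.2 hbs.1
  have f1 : faceFlip n (t ∪ s) a = xor (decide (b < a)) (faceFlip n t a) := by
    rw [e1]; unfold faceFlip; rw [Finset.filter_insert]
    split_ifs with h
    · rw [Finset.card_insert_of_notMem (by simp [hbs.2])]
      simp [h]; grind
    · simp [h]
  have f2 : faceFlip n (t ∪ s) b = xor (decide (a < b)) (faceFlip n s b) := by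
    rw [e2]; unfold faceFlip; rw [Finset.filter_insert]
    split_ifs with h
    · rw [Finset.card_insert_of_notMem (by simp [hat.2])]
      simp [h]; grind
    · simp [h]
  rw [f1, f2]
  rcases lt_or_gt_of_ne hab with h | h
  · simp [h, h.not_gt]
  · simp [h, h.not_gt]

theorem key {n : ℕ} (X : Finset (Finset (Fin n))) (w : Fin n → ℝ) (k : ℕ)
    (s t : Finset (Fin n)) (hs : s ∈ X) (hsc : s.card = k + 1) (ht : t ∈ X) (htc : t.card = k + 1) :
    Pharm n X w k (some (s, false)) (some (t, false)) - Pharm n X w k (some (s, false)) (some (t, true))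
      = fullLap n X w k t s / Kfull n X w k := by
  by_cases hts : t = s
  · subst hts
    simp [Pharm, fullLap, hs, hsc, down_diag X w k t hs hsc, up_diag X w k t hsc, DownAdj]
  have hst : s ≠ t := fun h => hts h.symm
  rw [fullLap, Matrix.add_apply, down_off X w k t s htc hts hsc, up_off X w k t s htc hts hsc]
  have hI := Finset.card_sdiff_add_card_inter t s
  have hI' := Finset.card_sdiff_add_card_inter s t
  have hU := Finset.card_union_add_card_inter t s
  rw [Finset.inter_comm s t] at hI'
  by_cases hcard : (t ∩ s).card = k
  · obtain ⟨a, ha⟩ := Finset.card_eq_one.1 (show (t \ s).card = 1 by omega)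
    obtain ⟨b, hb⟩ := Finset.card_eq_one.1 (show (s \ t).card = 1 by omega)
    have hf := flip_union t s a b ha hb
    rw [boundary_erase X w k (t ∩ s) t a (by rw [← ha]; ext; simp) ht htc
        Finset.inter_subset_left hcard,
      boundary_erase X w k (t ∩ s) s b (by rw [← hb]; ext; simp) hs hsc
        Finset.inter_subset_right hcard]
    have hUc : (s ∪ t).card = k + 2 := by rw [Finset.union_comm]; omega
    have hIc : (s ∩ t).card = k := by rw [Finset.inter_comm]; omega
    by_cases hUX : t ∪ s ∈ X
    · rw [boundary_erase X w (k+1) t (t ∪ s) b (by rw [← hb]; ext; simp; tauto) hUX (by omega)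
        Finset.subset_union_left htc,
        boundary_erase X w (k+1) s (t ∪ s) a (by rw [← ha]; ext; simp; tauto) hUX (by omega)
        Finset.subset_union_right hsc]
      simp only [sgn_flip]
      have hUX' := hUX
      rw [Finset.union_comm] at hUX'
      simp only [Pharm, hs, hsc, ht, htc, hst, UpAdj, DownAdj, hUX', ha, hb, hUc, hIc]
      rw [Finset.union_comm s t]
      cases h1 : faceFlip n (t ∪ s) a <;> cases h2 : faceFlip n (t ∪ s) b <;>
        cases h3 : faceFlip n t a <;> cases h4 : faceFlip n s b <;>
        simp [h1, h2, h3, h4] at hf <;> simp [hst, h1, h2, h3, h4] <;> ring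
    · have h0 : boundary n X w (k+1) t (t ∪ s) = 0 := by
        by_contra h; exact hUX (boundary_ne h).1
      simp only [h0, sgn_flip]
      have hUX' := hUX
      rw [Finset.union_comm] at hUX'
      simp only [Pharm, hs, hsc, ht, htc, hst, UpAdj, DownAdj, hUX', ha, hb, hUc, hIc]
      cases h3 : faceFlip n t a <;> cases h4 : faceFlip n s b <;> simp [hst, h3, h4] <;> ring
  · have h0 : boundary n X w k (t ∩ s) t = 0 := by
      by_contra h; exact hcard (boundary_ne h).2.2.2
    have h1 : boundary n X w (k+1) t (t ∪ s) = 0 := by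
      by_contra h; have := (boundary_ne h).2.1; omega
    have hIc : ¬ (s ∩ t).card = k := by rw [Finset.inter_comm]; omega
    simp [h0, h1, Pharm, hs, hsc, ht, htc, hst, DownAdj, hIc]

theorem lap_ne {n : ℕ} {X : Finset (Finset (Fin n))} (hX : IsComplex n X) {w : Fin n → ℝ} {k : ℕ}
    {t s : Finset (Fin n)} (h : fullLap n X w k t s ≠ 0) :
    (t ∈ X ∧ t.card = k + 1) ∧ (s ∈ X ∧ s.card = k + 1) := by
  by_cases hu : upLap n X w k t s = 0
  · have hd : downLap n X w k t s ≠ 0 := by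
      intro hd; apply h; simp [fullLap, hu, hd]
    simp only [downLap, Matrix.mul_apply, Matrix.transpose_apply] at hd
    obtain ⟨ρ, _, hρ⟩ := Finset.exists_ne_zero_of_sum_ne_zero hd
    have h1 := boundary_ne (left_ne_zero_of_mul hρ)
    have h2 := boundary_ne (right_ne_zero_of_mul hρ)
    exact ⟨⟨h1.1, h1.2.1⟩, h2.1, h2.2.1⟩
  · simp only [upLap, Matrix.mul_apply, Matrix.transpose_apply] at hu
    obtain ⟨ρ, _, hρ⟩ := Finset.exists_ne_zero_of_sum_ne_zero hu
    have h1 := boundary_ne (left_ne_zero_of_mul hρ)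
    have h2 := boundary_ne (right_ne_zero_of_mul hρ)
    exact ⟨⟨hX _ h1.1 _ h1.2.2.1, h1.2.2.2⟩, hX _ h2.1 _ h2.2.2.1, h2.2.2.2⟩

theorem PiPM_diag (n : ℕ) (X : Finset (Finset (Fin n))) (k : ℕ) :
    PiPM n X k = Matrix.diagonal fun p =>
      if ∃ σ : OSimp n, σ.1 ∈ X ∧ σ.1.card = k + 1 ∧ p = encode n (some σ) then 1 else 0 := by
  ext p q
  by_cases h : p = q
  · subst h
    rw [Matrix.diagonal_apply_eq]; simp only [PiPM, Matrix.of_apply, true_and]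
  · rw [Matrix.diagonal_apply_ne _ h]; simp only [PiPM, Matrix.of_apply, h, false_and, if_false]

theorem PiK_diag (n : ℕ) (X : Finset (Finset (Fin n))) (k : ℕ) :
    PiK n X k = Matrix.diagonal fun p =>
      if ∃ s ∈ X, s.card = k + 1 ∧ p = encode n (some (s, false)) then 1 else 0 := by
  ext p q
  by_cases h : p = q
  · subst h
    rw [Matrix.diagonal_apply_eq]; simp only [PiK, Matrix.of_apply, true_and]
  · rw [Matrix.diagonal_apply_ne _ h]; simp only [PiK, Matrix.of_apply, h, false_and, if_false]

theorem compress_hz (n α : ℕ) 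
    (U : Matrix (QIdx n × (Fin α → Bool)) (QIdx n × (Fin α → Bool)) ℂ) :
    compressA n α ((hzGate n ⊗ₖ (1 : Matrix (Fin α → Bool) (Fin α → Bool) ℂ)) * U) =
      hzGate n * compressA n α U := by
  ext p q
  simp only [compressA, Matrix.of_apply, Matrix.mul_apply, Fintype.sum_prod_type (α₁ := QIdx n),
    Matrix.kroneckerMap_apply]
  refine Finset.sum_congr rfl fun r _ => ?_
  rw [Finset.sum_eq_single (fun _ => false)]
  · simp
  · intro b _ hb; rw [Matrix.one_apply_ne hb.symm]; simp
  · simp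

theorem hz_mul (n : ℕ) (A : Matrix (QIdx n) (QIdx n) ℂ) (x : Fin n → Bool) (q : QIdx n) :
    (hzGate n * A) (x, false, false) q =
      ((Real.sqrt 2 : ℂ))⁻¹ * (A (x, false, false) q - A (x, true, false) q) := by
  rw [Matrix.mul_apply, Fintype.sum_prod_type, Finset.sum_eq_single x]
  · simp [Fintype.sum_prod_type, hzGate]; ring
  · intro b _ hb; simp [hzGate, hb.symm]
  · simp

theorem decode_encode (n : ℕ) (σ : OSimp n) : decodeQ n (encode n (some σ)) = some (some σ) := by
  simp [decodeQ, encode]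

/-- If `U` is a unitary encoding of `Π_k^± P Π_k^±` with an
`α`-qubit ancilla, then `V = ((I^{⊗n} ⊗ HZ ⊗ I) ⊗ I^{⊗α}) U` is a unitary encoding of
`Δ_k/(√2 · K)`. -/
theorem harmonic_walk_encodes_laplacian (n k α : ℕ) (X : Finset (Finset (Fin n)))
    (hX : IsComplex n X) (w : Fin n → ℝ) (hw : ∀ v, 0 < w v)
    (hne : (simplices n X k).Nonempty)
    (U : Matrix (QIdx n × (Fin α → Bool)) (QIdx n × (Fin α → Bool)) ℂ)
    (hU : U ∈ Matrix.unitaryGroup (QIdx n × (Fin α → Bool)) ℂ)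
    (henc : PiPM n X k * compressA n α U * PiPM n X k =
      PiPM n X k * toQMat n (Pharm n X w k) * PiPM n X k) :
    PiK n X k *
        compressA n α ((hzGate n ⊗ₖ (1 : Matrix (Fin α → Bool) (Fin α → Bool) ℂ)) * U) *
        PiK n X k =
      ((Real.sqrt 2 : ℂ) * (Kfull n X w k : ℂ))⁻¹ • lapQ n (fullLap n X w k) := by
  rw [compress_hz]
  have hA : ∀ σ τ : OSimp n, σ.1 ∈ X → σ.1.card = k + 1 → τ.1 ∈ X → τ.1.card = k + 1 →
      compressA n α U (encode n (some τ)) (encode n (some σ)) =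
        (Pharm n X w k (some σ) (some τ) : ℂ) := by
    intro σ τ h1 h2 h3 h4
    have h := congrFun (congrFun henc (encode n (some τ))) (encode n (some σ))
    rw [PiPM_diag, Matrix.mul_diagonal, Matrix.mul_diagonal, Matrix.diagonal_mul,
      Matrix.diagonal_mul, if_pos ⟨τ, h3, h4, rfl⟩, if_pos ⟨σ, h1, h2, rfl⟩] at h
    simpa [toQMat, decode_encode] using h
  generalize compressA n α U = A at hA
  ext p q
  rw [PiK_diag, Matrix.mul_diagonal, Matrix.diagonal_mul, Matrix.smul_apply]
  by_cases hpq : (∃ s ∈ X, s.card = k + 1 ∧ p = encode n (some (s, false))) ∧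
      ∃ s ∈ X, s.card = k + 1 ∧ q = encode n (some (s, false))
  · rw [if_pos hpq.1, if_pos hpq.2]
    obtain ⟨⟨t, ht, htc, rfl⟩, s, hs, hsc, rfl⟩ := hpq
    have e0 := hA (s, false) (t, false) hs hsc ht htc
    have e1 := hA (s, false) (t, true) hs hsc ht htc
    have hk := congrArg (fun x : ℝ => (x : ℂ)) (key X w k s t hs hsc ht htc)
    have hz := hz_mul n A (fun i => decide (i ∈ t)) (encode n (some (s, false)))
    simp only [encode] at e0 e1 hz ⊢
    rw [hz, e0, e1]
    simp only [Complex.ofReal_sub, Complex.ofReal_div] at hk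
    rw [hk]
    simp [lapQ]
    ring
  · have hL : lapQ n (fullLap n X w k) p q = 0 := by
      simp only [lapQ, Matrix.of_apply]
      split_ifs with hb
      · by_contra hne
        have hne' := lap_ne hX (fun h => hne (by rw [h]; simp))
        apply hpq
        obtain ⟨x, b, c⟩ := p
        obtain ⟨y, d, e⟩ := q
        obtain ⟨rfl, rfl, rfl, rfl⟩ := hb
        exact ⟨⟨_, hne'.1.1, hne'.1.2, by simp [encode]⟩, ⟨_, hne'.2.1, hne'.2.2, by simp [encode]⟩⟩
      · rfl
    rw [hL]
    rw [not_and_or] at hpq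
    rcases hpq with h | h <;> simp [if_neg h]
end QWSC
end
end

section
/- Let σ and σ' be oriented k-simplices with σ ∼↓ σ', and let v_σ and v_{σ'} be the vertices removed from σ and σ' respectively to obtain their common (k−1)-dimensional face. Then s(σ') ≡ s(σ) + Σ_{i ∈ (v_σ, v_{σ'})} (x_σ)_i (mod 2), where (v_σ, v_{σ'}) denotes the set of integers strictly between v_σ and v_{σ'} (in either order) and (x_σ)_i is the i-th bit of x_σ. -/
open BigOperators Matrix Kronecker

attribute [local instance] Classical.propDecidable

noncomputable section

namespace QWSC

theorem card_split_aux (n : ℕ) (T : Finset (Fin n)) (a b : Fin n) (hab : a < b) (ha : a ∉ T) :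
    (T.filter fun u => u < b).card =
      (T.filter fun u => u < a).card + (T.filter fun i => a < i ∧ i < b).card := by
  rw [← Finset.card_union_of_disjoint]
  · congr 1
    ext i
    simp only [Finset.mem_filter, Finset.mem_union]
    constructor
    · rintro ⟨hi, hib⟩
      rcases lt_trichotomy i a with h | h | h
      · exact Or.inl ⟨hi, h⟩
      · exact absurd (h ▸ hi) ha
      · exact Or.inr ⟨hi, h, hib⟩
    · rintro (⟨hi, h⟩ | ⟨hi, _, h⟩)
      · exact ⟨hi, h.trans hab⟩
      · exact ⟨hi, h⟩
  · rw [Finset.disjoint_left]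
    intro i hi hi'
    simp only [Finset.mem_filter] at hi hi'
    exact absurd hi.2 (not_lt.mpr hi'.2.1.le)

/-- If `σ ∼↓ σ'` and `v_σ`, `v_{σ'}` are the vertices removed from `σ`
and `σ'` to obtain the common face, then
`s(σ') ≡ s(σ) + Σ_{i ∈ (v_σ, v_{σ'})} (x_σ)_i (mod 2)`, where the sum ranges over the
vertices of `σ` strictly between `v_σ` and `v_{σ'}`. -/
theorem downAdj_orientation_parity (n k : ℕ) (σ σ' : OSimp n)
    (hσc : σ.1.card = k + 1) (hσ'c : σ'.1.card = k + 1)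
    (h : DownAdj n σ σ') :
    ∀ v ∈ σ.1 \ σ'.1, ∀ v' ∈ σ'.1 \ σ.1,
      σ'.2 = xor σ.2
        (decide ((σ.1.filter fun i => min v v' < i ∧ i < max v v').card % 2 = 1)) := by
  intro v hv v' hv'
  obtain ⟨-, hc, hcc, hx⟩ := h
  have hxx := hx v hv v' hv'
  have e1 : σ.1 \ σ'.1 = {v} := by
    have h1 : (σ.1 \ σ'.1).card = 1 := by
      have := Finset.card_sdiff_add_card_inter σ.1 σ'.1
      omega
    obtain ⟨a, ha⟩ := Finset.card_eq_one.mp h1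
    rw [ha] at hv ⊢
    rw [Finset.mem_singleton.mp hv]
  have e2 : σ'.1 \ σ.1 = {v'} := by
    have h1 : (σ'.1 \ σ.1).card = 1 := by
      have := Finset.card_sdiff_add_card_inter σ'.1 σ.1
      rw [Finset.inter_comm] at this
      omega
    obtain ⟨a, ha⟩ := Finset.card_eq_one.mp h1
    rw [ha] at hv' ⊢
    rw [Finset.mem_singleton.mp hv']
  have m1 : ∀ i, i ∈ σ.1 → i ∉ σ'.1 → i = v := fun i h h' =>
    Finset.mem_singleton.mp (e1 ▸ Finset.mem_sdiff.mpr ⟨h, h'⟩)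
  have m2 : ∀ i, i ∈ σ'.1 → i ∉ σ.1 → i = v' := fun i h h' =>
    Finset.mem_singleton.mp (e2 ▸ Finset.mem_sdiff.mpr ⟨h, h'⟩)
  rw [Finset.mem_sdiff] at hv hv'
  have f1 : (σ.1.filter fun u => u < v) = ((σ.1 ∩ σ'.1).filter fun u => u < v) := by
    ext i
    simp only [Finset.mem_filter, Finset.mem_inter]
    grind
  have f2 : (σ'.1.filter fun u => u < v') = ((σ.1 ∩ σ'.1).filter fun u => u < v') := by
    ext i
    simp only [Finset.mem_filter, Finset.mem_inter]
    grind
  have f3 : (σ.1.filter fun i => min v v' < i ∧ i < max v v') =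
      ((σ.1 ∩ σ'.1).filter fun i => min v v' < i ∧ i < max v v') := by
    ext i
    simp only [Finset.mem_filter, Finset.mem_inter]
    grind
  unfold faceFlip at hxx
  rw [f1, f2] at hxx
  rw [f3]
  have n1 : v ∉ σ.1 ∩ σ'.1 := fun h => hv.2 (Finset.mem_inter.mp h).2
  have n2 : v' ∉ σ.1 ∩ σ'.1 := fun h => hv'.2 (Finset.mem_inter.mp h).1
  have key : ∀ (s t : Bool) (p q r : ℕ), (q = p + r ∨ p = q + r) →
      xor s (decide (p % 2 = 1)) = xor t (decide (q % 2 = 1)) →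
      t = xor s (decide (r % 2 = 1)) := by
    intro s t p q r h1 h2
    have hp := Nat.mod_two_eq_zero_or_one p
    have hr := Nat.mod_two_eq_zero_or_one r
    have hq := Nat.mod_two_eq_zero_or_one q
    rcases hp with hp | hp <;> rcases hq with hq | hq <;> rcases hr with hr | hr <;>
      first
      | (exfalso; omega)
      | (rw [hp, hq] at h2; rw [hr]; revert h2; cases s <;> cases t <;> simp)
  refine key _ _ _ _ _ ?_ hxx
  rcases lt_trichotomy v v' with hlt | heq | hlt
  · left
    rw [min_eq_left hlt.le, max_eq_right hlt.le]
    exact card_split_aux n _ v v' hlt n1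
  · exact absurd (heq ▸ hv.1) hv'.2
  · right
    rw [min_eq_right hlt.le, max_eq_left hlt.le]
    exact card_split_aux n _ v' v hlt n2
end QWSC
end
end
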